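/- For every n ≥ 2, the permutation complexity of the Thue–Morse word satisfies τ(2n) ≤ 2·τ(n+1) and τ(2n+1) ≤ τ(n+1) + τ(n+2). -/

import Mathlib

/-!
Write `T` for the Thue–Morse word; it is fixed by the morphism `0 ↦ 01`, `1 ↦ 10`. The order of
two shifts of `T` is determined by the order of the shifts at the halved positions together with
a few letters:

* `T[2b] < T[2c]` iff `T[b] < T[c]` (`prec_even_even`);
* `T[2b+1] < T[2c+1]` iff `T_c < T_b`, or `T_b = T_c` and `T[b] < T[c]` (`prec_odd_odd`);
* every shift at an odd position starting with `0` lies below every shift at an even position,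
  and every shift at an odd position starting with `1` lies above (`prec_even_odd`,
  `prec_odd_even`), because `T` contains no cube of a letter.

Also `T_b = 0` iff `T[b] < T[b+1]`, so a subpermutation of length `N` determines the first
`N - 1` letters. Hence the subpermutation of length `N` at `a` determines that of length `M` at
`2a + s` as soon as `s + M ≤ 2N - 1` (`SamePerm.double`). Splitting the starting positions by
parity gives `τ(M) ≤ τ(N₀) + τ(N₁)` whenever `M ≤ 2N₀ - 1` and `M + 1 ≤ 2N₁ - 1`, and both
bounds are instances.
-/

/-- The Thue-Morse word: parity of the binary digit sum. -/
def TM (n : ℕ) : ℕ := (Nat.digits 2 n).sum % 2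

/-- `Prec a b` : the shift of the Thue-Morse word at `a` is lexicographically
smaller than the shift at `b`. -/
def Prec (a b : ℕ) : Prop :=
  ∃ c : ℕ, (∀ i < c, TM (a + i) = TM (b + i)) ∧ TM (a + c) < TM (b + c)

/-- The subpermutations of `π_T` of length `N` starting at `a` and `b` coincide. -/
def SamePerm (N a b : ℕ) : Prop :=
  ∀ i < N, ∀ j < N, (Prec (a + i) (a + j) ↔ Prec (b + i) (b + j))

open scoped Classical in
/-- `P a N i` : the 0-indexed rank of position `a+i` within the subpermutation
`π_T[a, a+N-1]`. -/
noncomputable def P (a N i : ℕ) : ℕ :=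
  ((Finset.range N).filter (fun j => Prec (a + j) (a + i))).card

/-- The subpermutations `π_T[a,a+N-1]` and `π_T[b,b+N-1]` have the same form. -/
def SameForm (N a b : ℕ) : Prop :=
  ∀ i < N - 1, (Prec (a + i) (a + (i + 1))) ↔ (Prec (b + i) (b + (i + 1)))

/-- The subpermutation `π_T[a,a+N-1]` is of type `k`. -/
def TypeK (k N a : ℕ) : Prop :=
  1 ≤ k ∧ 2 * k ≤ N ∧
  ∃ ε : ℤ, (ε = 1 ∨ ε = -1) ∧
    ∀ i < k, (P a N i : ℤ) = P a N (N - k + i) + ε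

/-- Positions `a` and `b` form a complementary pair of type `k` of length `N`. -/
def CompPair (k N a b : ℕ) : Prop :=
  1 ≤ k ∧ 2 * k ≤ N ∧
  ∃ ε : ℤ, (ε = 1 ∨ ε = -1) ∧
    (∀ i < k,
      (P a N i : ℤ) = P a N (N - k + i) + ε ∧
      (P b N i : ℤ) = P a N (N - k + i) ∧
      (P b N (N - k + i) : ℤ) = P a N i) ∧
    (∀ j, k ≤ j → j < N - k → P b N j = P a N j)

/-- The permutation complexity of the Thue-Morse word: the number of distinct
subpermutations of `π_T` of length `N`. -/
noncomputable def tau (N : ℕ) : ℕ :=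
  Set.ncard (Set.range (fun a : ℕ => fun i j : Fin N => Prec (a + i) (a + j)))

lemma TM_lt (n : ℕ) : TM n < 2 := Nat.mod_lt _ (by norm_num)

lemma TM_even (n : ℕ) : TM (2 * n) = TM n := by
  rcases Nat.eq_zero_or_pos n with rfl | h
  · rfl
  · unfold TM
    rw [Nat.digits_def' (by norm_num) (by omega)]
    simp

lemma TM_odd (n : ℕ) : TM (2 * n + 1) = 1 - TM n := by
  unfold TM
  rw [Nat.digits_def' (by norm_num) (by omega)]
  have h1 : (2 * n + 1) % 2 = 1 := by omega
  have h2 : (2 * n + 1) / 2 = n := by omega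
  rw [h1, h2, List.sum_cons]
  omega

lemma TM_no_cube (a : ℕ) : ¬ (TM a = TM (a + 1) ∧ TM (a + 1) = TM (a + 2)) := by
  obtain ⟨m, rfl | rfl⟩ := Nat.even_or_odd' a
  · have := TM_even m
    have := TM_odd m
    have := TM_lt m
    omega
  · have h1 := TM_even (m + 1)
    have h2 := TM_odd (m + 1)
    have := TM_lt (m + 1)
    rw [show 2 * (m + 1) = 2 * m + 1 + 1 by ring] at h1
    rw [show 2 * (m + 1) + 1 = 2 * m + 1 + 2 by ring] at h2
    omega

lemma prec_step (a b : ℕ) :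
    Prec a b ↔ TM a < TM b ∨ (TM a = TM b ∧ Prec (a + 1) (b + 1)) := by
  constructor
  · rintro ⟨c, h, hc⟩
    rcases c with _ | c
    · exact Or.inl hc
    · refine Or.inr ⟨h 0 (by omega), c, fun i hi => ?_, ?_⟩
      · have := h (i + 1) (by omega)
        rwa [show a + 1 + i = a + (i + 1) by ring, show b + 1 + i = b + (i + 1) by ring]
      · rwa [show a + 1 + c = a + (c + 1) by ring, show b + 1 + c = b + (c + 1) by ring]
  · rintro (h | ⟨h0, c, h, hc⟩)
    · exact ⟨0, by simp, h⟩
    · refine ⟨c + 1, fun i hi => ?_, ?_⟩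
      · rcases i with _ | i
        · exact h0
        · have := h i (by omega)
          rwa [show a + 1 + i = a + (i + 1) by ring, show b + 1 + i = b + (i + 1) by ring] at this
      · rwa [show a + 1 + c = a + (c + 1) by ring, show b + 1 + c = b + (c + 1) by ring] at hc

lemma prec_even_even (b c : ℕ) : Prec (2 * b) (2 * c) ↔ Prec b c := by
  have e : ∀ x i, TM (2 * x + 2 * i) = TM (x + i) := fun x i => by rw [← mul_add, TM_even]
  have o : ∀ x i, TM (2 * x + (2 * i + 1)) = 1 - TM (x + i) := fun x i => by
    rw [← TM_odd]; congr 1; ring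
  constructor
  · rintro ⟨k, h, hk⟩
    obtain ⟨m, rfl | rfl⟩ := Nat.even_or_odd' k
    · refine ⟨m, fun i hi => ?_, ?_⟩
      · have := h (2 * i) (by omega)
        rwa [e, e] at this
      · rwa [e, e] at hk
    · -- The second letter of a block is determined by the first.
      have := h (2 * m) (by omega)
      rw [e, e] at this
      rw [o, o, this] at hk
      omega
  · rintro ⟨m, h, hm⟩
    refine ⟨2 * m, fun i hi => ?_, by rwa [e, e]⟩
    obtain ⟨j, rfl | rfl⟩ := Nat.even_or_odd' i
    · rw [e, e, h j (by omega)]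
    · rw [o, o, h j (by omega)]

lemma prec_odd_odd (b c : ℕ) :
    Prec (2 * b + 1) (2 * c + 1) ↔ TM c < TM b ∨ (TM b = TM c ∧ Prec b c) := by
  rw [prec_step, show 2 * b + 1 + 1 = 2 * (b + 1) by ring,
    show 2 * c + 1 + 1 = 2 * (c + 1) by ring, prec_even_even, TM_odd, TM_odd, prec_step b c]
  have := TM_lt b
  have := TM_lt c
  by_cases h : Prec (b + 1) (c + 1) <;> simp only [h, and_true, and_false, or_false] <;> omega

/-- The letters of `T` at `2b, …, 2b+3` and at `2c+1, …, 2c+4`, in terms of halved positions. The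
two blocks never agree, since otherwise `T_c = T_{c+1} = T_{c+2}`. -/
lemma TM_block (b c : ℕ) :
    (TM (2 * b) = TM b ∧ TM (2 * b + 1) = 1 - TM b ∧ TM (2 * b + 1 + 1) = TM (b + 1) ∧
      TM (2 * b + 1 + 1 + 1) = 1 - TM (b + 1)) ∧
    (TM (2 * c + 1) = 1 - TM c ∧ TM (2 * c + 1 + 1) = TM (c + 1) ∧
      TM (2 * c + 1 + 1 + 1) = 1 - TM (c + 1) ∧ TM (2 * c + 1 + 1 + 1 + 1) = TM (c + 2)) :=
  ⟨⟨TM_even b, TM_odd b, TM_even (b + 1), TM_odd (b + 1)⟩,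
    ⟨TM_odd c, TM_even (c + 1), TM_odd (c + 1), TM_even (c + 2)⟩⟩

lemma prec_even_odd (b c : ℕ) : Prec (2 * b) (2 * c + 1) ↔ TM c = 0 := by
  have h := TM_block b c
  have := TM_no_cube c
  have := TM_lt b
  have := TM_lt (b + 1)
  have := TM_lt c
  have := TM_lt (c + 1)
  have := TM_lt (c + 2)
  rw [prec_step, prec_step (2 * b + 1), prec_step (2 * b + 1 + 1), prec_step (2 * b + 1 + 1 + 1)]
  by_cases q : Prec (2 * b + 1 + 1 + 1 + 1) (2 * c + 1 + 1 + 1 + 1 + 1) <;> simp only [q] <;> omega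

lemma prec_odd_even (b c : ℕ) : Prec (2 * c + 1) (2 * b) ↔ TM c = 1 := by
  have h := TM_block b c
  have := TM_no_cube c
  have := TM_lt b
  have := TM_lt (b + 1)
  have := TM_lt c
  have := TM_lt (c + 1)
  have := TM_lt (c + 2)
  rw [prec_step, prec_step _ (2 * b + 1), prec_step _ (2 * b + 1 + 1),
    prec_step _ (2 * b + 1 + 1 + 1)]
  by_cases q : Prec (2 * c + 1 + 1 + 1 + 1 + 1) (2 * b + 1 + 1 + 1 + 1) <;> simp only [q] <;> omega

lemma prec_succ (b : ℕ) : Prec b (b + 1) ↔ TM b = 0 := by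
  have h := TM_no_cube b
  have := TM_lt b
  have := TM_lt (b + 1)
  have := TM_lt (b + 2)
  rw [prec_step, prec_step (b + 1)]
  rw [show b + 1 + 1 = b + 2 by ring]
  by_cases q : Prec (b + 2) (b + 2 + 1) <;> simp only [q] <;> omega

lemma SamePerm.TM_eq {N a b : ℕ} (h : SamePerm N a b) {i : ℕ} (hi : i + 1 < N) :
    TM (a + i) = TM (b + i) := by
  have := h i (by omega) (i + 1) hi
  rw [← add_assoc, ← add_assoc, prec_succ, prec_succ] at this
  have := TM_lt (a + i)
  have := TM_lt (b + i)
  omega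

/-- The subpermutation of length `N` at `a` determines the one of length `M` at `2a + s`. -/
lemma SamePerm.double {N a b : ℕ} (h : SamePerm N a b) {s M : ℕ} (hM : s + M + 1 ≤ 2 * N) :
    SamePerm M (2 * a + s) (2 * b + s) := by
  have key : ∀ p q, p < s + M → q < s + M →
      (Prec (2 * a + p) (2 * a + q) ↔ Prec (2 * b + p) (2 * b + q)) := by
    intro p q hp hq
    have e : ∀ x i, 2 * x + 2 * i = 2 * (x + i) := fun x i => by ring
    have o : ∀ x i, 2 * x + (2 * i + 1) = 2 * (x + i) + 1 := fun x i => by ring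
    obtain ⟨u, rfl | rfl⟩ := Nat.even_or_odd' p <;> obtain ⟨v, rfl | rfl⟩ := Nat.even_or_odd' q
    · simp only [e, prec_even_even]
      exact h u (by omega) v (by omega)
    · simp only [e, o, prec_even_odd]
      rw [h.TM_eq (i := v) (by omega)]
    · simp only [e, o, prec_odd_even]
      rw [h.TM_eq (i := u) (by omega)]
    · simp only [o, prec_odd_odd]
      rw [h.TM_eq (i := u) (by omega), h.TM_eq (i := v) (by omega), h u (by omega) v (by omega)]
  intro i hi j hj
  simpa only [add_assoc] using key (s + i) (s + j) (by omega) (by omega)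

/-- The subpermutation of length `N` at `a`, as a relation on `Fin N`. -/
def subperm (N a : ℕ) : Fin N → Fin N → Prop := fun i j => Prec (a + i) (a + j)

lemma subperm_eq_iff {N a b : ℕ} : subperm N a = subperm N b ↔ SamePerm N a b := by
  constructor
  · intro h i hi j hj
    exact iff_of_eq (congrFun (congrFun h ⟨i, hi⟩) ⟨j, hj⟩)
  · intro h
    funext i j
    exact propext (h i i.2 j j.2)

/-- There are at most `τ(N)` subpermutations of length `M` at positions of the form `2a + s`. -/
lemma ncard_range_double_le {N M s : ℕ} (hM : s + M + 1 ≤ 2 * N) :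
    (Set.range fun a => subperm M (2 * a + s)).ncard ≤ tau N := by
  have hf : (fun a => subperm M (2 * a + s)).FactorsThrough (subperm N) := fun a b hab =>
    subperm_eq_iff.2 ((subperm_eq_iff.1 hab).double hM)
  obtain ⟨g, hg⟩ := Function.factorsThrough_iff _ |>.1 hf
  rw [hg, Set.range_comp]
  exact Set.ncard_image_le (Set.toFinite _)

lemma tau_le_add {M N₀ N₁ : ℕ} (h₀ : M + 1 ≤ 2 * N₀) (h₁ : M + 2 ≤ 2 * N₁) :
    tau M ≤ tau N₀ + tau N₁ := by
  have hsub : Set.range (subperm M) ⊆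
      (Set.range fun a => subperm M (2 * a + 0)) ∪ Set.range fun a => subperm M (2 * a + 1) := by
    rintro _ ⟨a, rfl⟩
    obtain ⟨m, rfl | rfl⟩ := Nat.even_or_odd' a
    · exact Or.inl ⟨m, rfl⟩
    · exact Or.inr ⟨m, rfl⟩
  calc tau M ≤ _ := Set.ncard_le_ncard hsub (Set.toFinite _)
    _ ≤ _ := Set.ncard_union_le _ _
    _ ≤ _ := add_le_add (ncard_range_double_le (by omega)) (ncard_range_double_le (by omega))

/-- Upper bounds for the permutation complexity of the Thue-Morse word. -/
theorem tau_upper_bounds (n : ℕ) (hn : 2 ≤ n) :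
    tau (2 * n) ≤ 2 * tau (n + 1) ∧ tau (2 * n + 1) ≤ tau (n + 1) + tau (n + 2) := by
  constructor
  · rw [two_mul (tau _)]
    exact tau_le_add (by omega) (by omega)
  · exact tau_le_add (by omega) (by omega)
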